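/- arXiv:0806.4885 — 2 statements merged into one kernel-verified Lean document; each statement's English description precedes it below -/
import Mathlib

section
/- Let f : ℝ → ℝ be continuously differentiable and let u : ℝ^N → ℝ be C³ with Δu + f(u) = 0 on ℝ^N and DV ≡ 0 on U = {x : ∇u(x) ≠ 0}, where V = ∇u/‖∇u‖. Let w ∈ ℝ^N with ‖w‖ = 1, p ∈ ℝ^N, γ(t) = p + t w, and h = u ∘ γ, and assume h is nonconstant on ℝ. Let (a, b) be a connected component of {t ∈ ℝ : γ(t) ∈ U} with a ∈ ℝ finite, and set r = b − a ∈ (0, +∞]. Then h(a + s) = h(a − s) for all s ∈ ℝ, and the interval (a − r, a) is also a connected component of {t ∈ ℝ : γ(t) ∈ U}. -/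
open RealInnerProductSpace MeasureTheory Filter

/-- The Hessian bilinear form of `u : ℝ^N → ℝ` at `x`, applied to `w₁, w₂`. -/
noncomputable def Hess {N : ℕ} (u : EuclideanSpace ℝ (Fin N) → ℝ)
    (x w₁ w₂ : EuclideanSpace ℝ (Fin N)) : ℝ :=
  fderiv ℝ (fun y => fderiv ℝ u y w₁) x w₂

/-- The Laplacian `Δu = tr Hess u`. -/
noncomputable def Lap {N : ℕ} (u : EuclideanSpace ℝ (Fin N) → ℝ)
    (x : EuclideanSpace ℝ (Fin N)) : ℝ :=
  ∑ i : Fin N, Hess u x (EuclideanSpace.single i 1) (EuclideanSpace.single i 1)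

/-- The normalized gradient `V = ∇u / ‖∇u‖` (junk value `0` where `∇u = 0`). -/
noncomputable def NGrad {N : ℕ} (u : EuclideanSpace ℝ (Fin N) → ℝ)
    (x : EuclideanSpace ℝ (Fin N)) : EuclideanSpace ℝ (Fin N) :=
  ‖gradient u x‖⁻¹ • gradient u x

/-- The squared Frobenius norm of a linear map on `ℝ^N`. -/
noncomputable def FrobSq {N : ℕ}
    (A : EuclideanSpace ℝ (Fin N) →L[ℝ] EuclideanSpace ℝ (Fin N)) : ℝ :=
  ∑ i : Fin N, ‖A (EuclideanSpace.single i 1)‖ ^ 2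

/-- The divergence `div Z = ∑ i ∂Zᵢ/∂xᵢ` of a vector field on `ℝ^N`. -/
noncomputable def Divg {N : ℕ} (Z : EuclideanSpace ℝ (Fin N) → EuclideanSpace ℝ (Fin N))
    (x : EuclideanSpace ℝ (Fin N)) : ℝ :=
  ∑ i : Fin N, ⟪fderiv ℝ Z x (EuclideanSpace.single i 1), EuclideanSpace.single i 1⟫

/-- The Frobenius inner product `⟨A, B⟩_F = ∑ᵢⱼ Aᵢⱼ Bᵢⱼ` of two linear maps on `ℝ^N`. -/
noncomputable def FrobInner {N : ℕ}
    (A B : EuclideanSpace ℝ (Fin N) →L[ℝ] EuclideanSpace ℝ (Fin N)) : ℝ :=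
  ∑ i : Fin N, ⟪A (EuclideanSpace.single i 1), B (EuclideanSpace.single i 1)⟫

/-!
Write `X t = ∇u(γ t)`. Where the gradient does not vanish, `DV = 0` forces the Hessian to have rank
one, and the equation `Δu = -f(u)` fixes its only eigenvalue, so `X' = -f(h) P w` with `P` the
orthogonal projection to the line spanned by `X`; that line is constant as long as `X ≠ 0`.

The line is the same on both sides of every zero of `X`: by uniqueness for the autonomous system
`h' = ⟪X, w⟫`, `X' = -f(h) P w` with `P` frozen, `X` and `X'` have no common zero, and at a simple
zero `X'` spans the line from either side. Hence `(h, X)` solves that system with one `P` for all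
times. The system is invariant under `(t, h, X) ↦ (2 * a - t, h, -X)`, so uniqueness makes every
zero `a` of `X` a centre of symmetry.
-/

section Dynamics

open Set Topology NormedSpace

lemma eqOn_of_hasDerivAt_of_locallyLipschitz {F : Type*} [NormedAddCommGroup F] [NormedSpace ℝ F]
    {Φ : F → F} (hΦ : LocallyLipschitz Φ) {z₁ z₂ : ℝ → F} {s : Set ℝ} [s.OrdConnected]
    (h₁ : ∀ t ∈ s, HasDerivAt z₁ (Φ (z₁ t)) t) (h₂ : ∀ t ∈ s, HasDerivAt z₂ (Φ (z₂ t)) t)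
    {t₁ : ℝ} (ht₁ : t₁ ∈ s) (heq : z₁ t₁ = z₂ t₁) : EqOn z₁ z₂ s := by
  intro t ht
  have hsub : uIcc t₁ t ⊆ s := OrdConnected.uIcc_subset ‹_› ht₁ ht
  have hc₁ : ContinuousOn z₁ (uIcc t₁ t) := HasDerivAt.continuousOn fun r hr => h₁ r (hsub hr)
  have hc₂ : ContinuousOn z₂ (uIcc t₁ t) := HasDerivAt.continuousOn fun r hr => h₂ r (hsub hr)
  obtain ⟨K, hK⟩ := LocallyLipschitzOn.exists_lipschitzOnWith_of_compact
    ((isCompact_uIcc.image_of_continuousOn hc₁).union (isCompact_uIcc.image_of_continuousOn hc₂))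
    hΦ.locallyLipschitzOn
  rcases le_total t₁ t with hle | hle
  · rw [uIcc_of_le hle] at hsub hc₁ hc₂ hK
    have hsub' := Ico_subset_Icc_self.trans hsub
    exact ODE_solution_unique_of_mem_Icc_right (v := fun _ => Φ) (fun _ _ => hK)
      hc₁ (fun r hr => (h₁ r (hsub' hr)).hasDerivWithinAt)
      (fun r hr => .inl ⟨r, Ico_subset_Icc_self hr, rfl⟩)
      hc₂ (fun r hr => (h₂ r (hsub' hr)).hasDerivWithinAt)
      (fun r hr => .inr ⟨r, Ico_subset_Icc_self hr, rfl⟩) heq (right_mem_Icc.2 hle)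
  · rw [uIcc_of_ge hle] at hsub hc₁ hc₂ hK
    have hsub' := Ioc_subset_Icc_self.trans hsub
    exact ODE_solution_unique_of_mem_Icc_left (v := fun _ => Φ) (fun _ _ => hK)
      hc₁ (fun r hr => (h₁ r (hsub' hr)).hasDerivWithinAt)
      (fun r hr => .inl ⟨r, Ioc_subset_Icc_self hr, rfl⟩)
      hc₂ (fun r hr => (h₂ r (hsub' hr)).hasDerivWithinAt)
      (fun r hr => .inr ⟨r, Ioc_subset_Icc_self hr, rfl⟩) heq (left_mem_Icc.2 hle)

lemma span_singleton_eq_of_mem {K M : Type*} [DivisionRing K] [AddCommGroup M] [Module K M]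
    {x y : M} (hx : x ≠ 0) (hxy : x ∈ K ∙ y) : K ∙ x = K ∙ y := by
  obtain ⟨c, rfl⟩ := Submodule.mem_span_singleton.1 hxy
  exact Submodule.span_singleton_smul_eq (left_ne_zero_of_smul hx).isUnit y

lemma span_normalize {F : Type*} [NormedAddCommGroup F] [NormedSpace ℝ F] (x : F) :
    ℝ ∙ normalize x = ℝ ∙ x := by
  rcases eq_or_ne x 0 with rfl | hx
  · rw [normalize_zero_eq_zero]
  · exact Submodule.span_singleton_smul_eq (inv_ne_zero (norm_ne_zero_iff.2 hx)).isUnit x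

variable {E : Type*} [NormedAddCommGroup E] [InnerProductSpace ℝ E]

lemma hasDerivAt_normalize_of_deriv_eq_smul {X : ℝ → E} {t c : ℝ} (hX : HasDerivAt X (c • X t) t)
    (ht : X t ≠ 0) : HasDerivAt (fun s => normalize (X s)) 0 t := by
  have hnorm : ‖X t‖ ≠ 0 := norm_ne_zero_iff.2 ht
  have hderiv_norm : HasDerivAt (fun s => ‖X s‖) (c * ‖X t‖) t := by
    have hsqrt := hX.norm_sq.sqrt (pow_ne_zero 2 hnorm)
    simp only [Real.sqrt_sq (norm_nonneg _), real_inner_smul_right,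
      real_inner_self_eq_norm_sq] at hsqrt
    convert hsqrt using 1
    field_simp
  have hcancel : ‖X t‖⁻¹ * c + -(c * ‖X t‖) / ‖X t‖ ^ 2 = 0 := by field_simp; ring
  have hV := (hderiv_norm.inv hnorm).smul hX
  rwa [Pi.inv_apply, smul_smul, ← add_smul, hcancel, zero_smul] at hV

lemma span_eq_of_deriv_mem_span {X : ℝ → E} {I : Set ℝ} (hI : IsOpen I) (hI' : IsPreconnected I)
    (hX : ∀ t ∈ I, DifferentiableAt ℝ X t) (h0 : ∀ t ∈ I, X t ≠ 0)
    (hderiv : ∀ t ∈ I, deriv X t ∈ ℝ ∙ X t) {r s : ℝ} (hr : r ∈ I) (hs : s ∈ I) :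
    ℝ ∙ X r = ℝ ∙ X s := by
  have hV : ∀ t ∈ I, HasDerivAt (fun s => normalize (X s)) 0 t := fun t ht => by
    obtain ⟨c, hc⟩ := Submodule.mem_span_singleton.1 (hderiv t ht)
    exact hasDerivAt_normalize_of_deriv_eq_smul (hc ▸ (hX t ht).hasDerivAt) (h0 t ht)
  rw [← span_normalize (X r), ← span_normalize (X s),
    hI.is_const_of_deriv_eq_zero hI'
      (fun t ht => (hV t ht).differentiableAt.differentiableWithinAt)
      (fun t ht => (hV t ht).deriv) hr hs]

/-- The restriction to a line with velocity `w` of a solution of `Δu + f(u) = 0` whose normalized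
gradient is locally constant: `h` is the profile of `u` and `X` is the gradient of `u` along the
line. Only the line spanned by `X t` enters the equation, so the sign of the normalized gradient
never has to be tracked. -/
structure IsGradientProfile (f : ℝ → ℝ) (w : E) (h : ℝ → ℝ) (X : ℝ → E) : Prop where
  contDiff : ContDiff ℝ 1 X
  hasDerivAt_profile : ∀ t, HasDerivAt h ⟪X t, w⟫ t
  deriv_eq : ∀ t, X t ≠ 0 → deriv X t = -f (h t) • (ℝ ∙ X t).starProjection w

/-- The times at which the gradient `X` lies in the subspace `ℓ` and evolves as if its direction
were `ℓ` for ever. The second condition makes sense at zeros of `X`, where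
`IsGradientProfile.deriv_eq` says nothing. -/
def alignedSet (f : ℝ → ℝ) (w : E) (h : ℝ → ℝ) (X : ℝ → E) (ℓ : Submodule ℝ E)
    [ℓ.HasOrthogonalProjection] : Set ℝ :=
  {t | X t ∈ ℓ ∧ deriv X t = -f (h t) • ℓ.starProjection w}

/-- The autonomous vector field governing `(h, X)` as long as `X` keeps its direction, `q` being the
orthogonal projection of `w` to that direction. -/
def profileField (f : ℝ → ℝ) (w q : E) (z : ℝ × E) : ℝ × E :=
  (⟪z.2, w⟫, -f z.1 • q)

lemma locallyLipschitz_profileField {f : ℝ → ℝ} (hf : LocallyLipschitz f) (w q : E) :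
    LocallyLipschitz (profileField f w q) := by
  have hfst : LocallyLipschitz fun z : ℝ × E => ⟪z.2, w⟫ := by
    simp only [real_inner_comm w]
    exact ((innerSL ℝ w).lipschitz.comp LipschitzWith.prod_snd).locallyLipschitz
  have hsnd : LocallyLipschitz fun z : ℝ × E => -f z.1 • q :=
    ((-ContinuousLinearMap.id ℝ ℝ).smulRight q).lipschitz.locallyLipschitz.comp
      (hf.comp LipschitzWith.prod_fst.locallyLipschitz)
  exact hfst.prodMk hsnd

variable {f : ℝ → ℝ} {w : E} {h : ℝ → ℝ} {X : ℝ → E}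

lemma alignedSet_span_congr {x y : E} (hxy : ℝ ∙ x = ℝ ∙ y) :
    alignedSet f w h X (ℝ ∙ x) = alignedSet f w h X (ℝ ∙ y) := by
  simp only [alignedSet, hxy]

lemma alignedSet_span_eq_of_mem {x y : E} {t : ℝ} (ht : X t ≠ 0 ∨ deriv X t ≠ 0)
    (hx : t ∈ alignedSet f w h X (ℝ ∙ x)) (hy : t ∈ alignedSet f w h X (ℝ ∙ y)) :
    alignedSet f w h X (ℝ ∙ x) = alignedSet f w h X (ℝ ∙ y) := by
  have hderiv_mem : ∀ {z : E}, t ∈ alignedSet f w h X (ℝ ∙ z) → deriv X t ∈ ℝ ∙ z := fun hz =>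
    hz.2 ▸ Submodule.smul_mem _ _ (Submodule.starProjection_apply_mem _ _)
  apply alignedSet_span_congr
  rcases ht with ht | ht
  · exact (span_singleton_eq_of_mem ht hx.1).symm.trans (span_singleton_eq_of_mem ht hy.1)
  · exact (span_singleton_eq_of_mem ht (hderiv_mem hx)).symm.trans
      (span_singleton_eq_of_mem ht (hderiv_mem hy))

namespace IsGradientProfile

lemma differentiableAt (hX : IsGradientProfile f w h X) (t : ℝ) : DifferentiableAt ℝ X t :=
  hX.contDiff.differentiable one_ne_zero t

lemma continuous_profile (hX : IsGradientProfile f w h X) : Continuous h :=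
  continuous_iff_continuousAt.2 fun t => (hX.hasDerivAt_profile t).continuousAt

lemma isClosed_alignedSet (hX : IsGradientProfile f w h X) (hf : Continuous f)
    (ℓ : Submodule ℝ E) [FiniteDimensional ℝ ℓ] : IsClosed (alignedSet f w h X ℓ) :=
  (ℓ.closed_of_finiteDimensional.preimage hX.contDiff.continuous).inter <|
    isClosed_eq (hX.contDiff.continuous_deriv_one)
      ((hf.comp hX.continuous_profile).neg.smul continuous_const)

lemma mem_alignedSet_span (hX : IsGradientProfile f w h X) {t : ℝ} (ht : X t ≠ 0) :
    t ∈ alignedSet f w h X (ℝ ∙ X t) :=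
  ⟨Submodule.mem_span_singleton_self _, hX.deriv_eq t ht⟩

lemma closure_subset_alignedSet (hX : IsGradientProfile f w h X) (hf : Continuous f) {I : Set ℝ}
    (hI : IsOpen I) (hI' : IsPreconnected I) (h0 : ∀ t ∈ I, X t ≠ 0) {r : ℝ} (hr : r ∈ I) :
    closure I ⊆ alignedSet f w h X (ℝ ∙ X r) := by
  refine closure_minimal (fun s hs => ?_) (hX.isClosed_alignedSet hf _)
  have hderiv : ∀ t ∈ I, deriv X t ∈ ℝ ∙ X t := fun t ht =>
    hX.deriv_eq t (h0 t ht) ▸ Submodule.smul_mem _ _ (Submodule.starProjection_apply_mem _ _)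
  rw [alignedSet_span_congr (span_eq_of_deriv_mem_span hI hI' (fun t _ => hX.differentiableAt t)
    h0 hderiv hr hs)]
  exact hX.mem_alignedSet_span (h0 s hs)

lemma subset_alignedSet_of_mem_closure (hX : IsGradientProfile f w h X) (hf : Continuous f)
    {I : Set ℝ} (hI : IsOpen I) (hI' : IsPreconnected I) (h0 : ∀ t ∈ I, X t ≠ 0) {v : E} {t : ℝ}
    (htI : t ∈ closure I) (htv : t ∈ alignedSet f w h X (ℝ ∙ v)) (ht : X t ≠ 0 ∨ deriv X t ≠ 0) :
    I ⊆ alignedSet f w h X (ℝ ∙ v) := by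
  intro r hr
  have hcl := hX.closure_subset_alignedSet hf hI hI' h0 hr
  rw [alignedSet_span_eq_of_mem ht htv (hcl htI)]
  exact hcl (subset_closure hr)

lemma eventually_ne_zero (hX : IsGradientProfile f w h X) {t : ℝ}
    (ht : X t ≠ 0 ∨ deriv X t ≠ 0) : ∀ᶠ s in 𝓝[≠] t, X s ≠ 0 := by
  rcases ht with ht | ht
  · exact (hX.contDiff.continuous.continuousAt.eventually_ne ht).filter_mono nhdsWithin_le_nhds
  · exact (hX.differentiableAt t).hasDerivAt.eventually_ne ht

/-- If `X` vanishes at `t` but `X'` does not, then `X' t` is a common nonzero vector of the lines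
spanned by `X` on either side of `t`: the direction survives the crossing. -/
lemma alignedSet_mem_nhds (hX : IsGradientProfile f w h X) (hf : Continuous f) {v : E} {t : ℝ}
    (htv : t ∈ alignedSet f w h X (ℝ ∙ v)) (ht : X t ≠ 0 ∨ deriv X t ≠ 0) :
    alignedSet f w h X (ℝ ∙ v) ∈ 𝓝 t := by
  obtain ⟨hleft, hright⟩ := eventually_sup.1 (nhdsLT_sup_nhdsGT t ▸ hX.eventually_ne_zero ht)
  obtain ⟨l, hl : l < t, hl0⟩ := mem_nhdsLT_iff_exists_Ioo_subset.1 hleft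
  obtain ⟨r, hr : t < r, hr0⟩ := mem_nhdsGT_iff_exists_Ioo_subset.1 hright
  have hsub : ∀ {I}, IsOpen I → IsPreconnected I → (∀ s ∈ I, X s ≠ 0) → t ∈ closure I →
      I ⊆ alignedSet f w h X (ℝ ∙ v) := fun hI hI' h0 htI =>
    hX.subset_alignedSet_of_mem_closure hf hI hI' h0 htI htv ht
  rw [← insert_eq_of_mem htv, insert_mem_nhds_iff, ← nhdsLT_sup_nhdsGT, mem_sup]
  exact
    ⟨mem_of_superset (Ioo_mem_nhdsLT hl) <| hsub isOpen_Ioo isPreconnected_Ioo hl0 <|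
        closure_Ioo hl.ne ▸ right_mem_Icc.2 hl.le,
      mem_of_superset (Ioo_mem_nhdsGT hr) <| hsub isOpen_Ioo isPreconnected_Ioo hr0 <|
        closure_Ioo hr.ne ▸ left_mem_Icc.2 hr.le⟩

lemma hasDerivAt_prodMk (hX : IsGradientProfile f w h X) {ℓ : Submodule ℝ E}
    [ℓ.HasOrthogonalProjection] {t : ℝ} (ht : t ∈ alignedSet f w h X ℓ) :
    HasDerivAt (fun s => (h s, X s)) (profileField f w (ℓ.starProjection w) (h t, X t)) t :=
  (hX.hasDerivAt_profile t).prodMk (ht.2 ▸ (hX.differentiableAt t).hasDerivAt)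

/-- A common zero of `X` and `X'` would be an equilibrium of `profileField`. -/
lemma ne_zero_or_deriv_ne_zero (hX : IsGradientProfile f w h X) (hf : LocallyLipschitz f)
    {ℓ : Submodule ℝ E} [ℓ.HasOrthogonalProjection] {C : Set ℝ} [C.OrdConnected]
    (hC : C ⊆ alignedSet f w h X ℓ) {t₀ t : ℝ} (ht₀ : t₀ ∈ C) (hXt₀ : X t₀ ≠ 0) (ht : t ∈ C) :
    X t ≠ 0 ∨ deriv X t ≠ 0 := by
  by_contra! hzero
  obtain ⟨hXt, hXt'⟩ := hzero
  have hequilibrium : profileField f w (ℓ.starProjection w) (h t, X t) = 0 := by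
    rw [profileField, ← (hC ht).2, hXt, hXt', inner_zero_left, Prod.mk_zero_zero]
  have hconst := eqOn_of_hasDerivAt_of_locallyLipschitz
    (locallyLipschitz_profileField hf w (ℓ.starProjection w))
    (fun s hs => hX.hasDerivAt_prodMk (hC hs))
    (fun s _ => hequilibrium ▸ hasDerivAt_const s (h t, X t)) ht rfl ht₀
  exact hXt₀ ((congrArg Prod.snd hconst).trans hXt)

lemma alignedSet_eq_univ (hX : IsGradientProfile f w h X) (hf : LocallyLipschitz f) {t₀ : ℝ}
    (ht₀ : X t₀ ≠ 0) : alignedSet f w h X (ℝ ∙ X t₀) = univ := by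
  set A := alignedSet f w h X (ℝ ∙ X t₀)
  set C := connectedComponentIn A t₀
  have hCA : C ⊆ A := connectedComponentIn_subset _ _
  have hC : IsPreconnected C := isPreconnected_connectedComponentIn
  have ht₀C : t₀ ∈ C := mem_connectedComponentIn (hX.mem_alignedSet_span ht₀)
  have hclosed : IsClosed C := isClosed_of_closure_subset <|
    hC.closure.subset_connectedComponentIn (subset_closure ht₀C)
      (closure_minimal hCA (hX.isClosed_alignedSet hf.continuous _))
  have hopen : IsOpen C := isOpen_iff_mem_nhds.2 fun t ht => by
    have := hC.ordConnected
    have hnondeg := hX.ne_zero_or_deriv_ne_zero hf hCA ht₀C ht₀ ht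
    rw [show C = connectedComponentIn A t from connectedComponentIn_eq ht]
    exact connectedComponentIn_mem_nhds
      (hX.alignedSet_mem_nhds hf.continuous (hCA ht) hnondeg)
  exact univ_subset_iff.1 <| IsClopen.eq_univ ⟨hclosed, hopen⟩ ⟨t₀, ht₀C⟩ ▸ hCA

/-- `(h, X)` and its image under `(t, h, X) ↦ (2 * a - t, h, -X)` solve the same autonomous system
and agree at `a`. -/
theorem reflect_eq (hX : IsGradientProfile f w h X) (hf : LocallyLipschitz f) {t₀ a : ℝ}
    (ht₀ : X t₀ ≠ 0) (ha : X a = 0) (t : ℝ) : h (2 * a - t) = h t ∧ X (2 * a - t) = -X t := by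
  set q := (ℝ ∙ X t₀).starProjection w
  have haligned : ∀ t, t ∈ alignedSet f w h X (ℝ ∙ X t₀) := fun t =>
    hX.alignedSet_eq_univ hf ht₀ ▸ mem_univ t
  have hreflect : ∀ t, HasDerivAt (fun s => (h (2 * a - s), -X (2 * a - s)))
      (profileField f w q (h (2 * a - t), -X (2 * a - t))) t := fun t => by
    have hh := (hX.hasDerivAt_profile (2 * a - t)).comp_const_sub (2 * a) t
    have hX' := (hX.differentiableAt (2 * a - t)).hasDerivAt.comp_const_sub (2 * a) t
    rw [profileField, inner_neg_left, ← (haligned (2 * a - t)).2, ← neg_neg (deriv X _)]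
    exact hh.prodMk hX'.neg
  have heq := eqOn_of_hasDerivAt_of_locallyLipschitz (locallyLipschitz_profileField hf w q)
    (fun s _ => hreflect s) (fun s _ => hX.hasDerivAt_prodMk (haligned s)) (mem_univ a)
    (by simp only [two_mul, add_sub_cancel_right, ha, neg_zero]) (mem_univ t)
  exact ⟨congrArg Prod.fst heq, neg_eq_iff_eq_neg.1 (congrArg Prod.snd heq)⟩

end IsGradientProfile

end Dynamics

section Gradient

open InnerProductSpace NormedSpace
open scoped Gradient ContDiff Laplacian

lemma fderiv_mem_span_of_fderiv_normalize_eq_zero {E F : Type*} [NormedAddCommGroup E]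
    [InnerProductSpace ℝ E] [NormedAddCommGroup F] [NormedSpace ℝ F] {G : F → E} {x : F}
    (hG : DifferentiableAt ℝ G x) (hx : G x ≠ 0)
    (hV : fderiv ℝ (fun y => normalize (G y)) x = 0) (y : F) : fderiv ℝ G x y ∈ ℝ ∙ G x := by
  have hnorm : DifferentiableAt ℝ (fun y => ‖G y‖) x := hG.norm ℝ hx
  have hdiff : DifferentiableAt ℝ (fun y => normalize (G y)) x :=
    (hnorm.inv (norm_ne_zero_iff.2 hx)).smul hG
  have hderiv : fderiv ℝ G x = (fderiv ℝ (fun y => ‖G y‖) x).smulRight (normalize (G x)) := by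
    have hproduct := fderiv_fun_smul hnorm hdiff
    simpa only [norm_smul_normalize, hV, smul_zero, zero_add] using hproduct
  rw [hderiv, ← span_normalize (G x)]
  exact Submodule.smul_mem _ _ (Submodule.mem_span_singleton_self _)

lemma apply_eq_trace_smul_starProjection {𝕜 E : Type*} [RCLike 𝕜] [NormedAddCommGroup E]
    [InnerProductSpace 𝕜 E] [FiniteDimensional 𝕜 E] {T : E →ₗ[𝕜] E} (hT : T.IsSymmetric) {v : E}
    (hv : ∀ y, T y ∈ 𝕜 ∙ v) (y : E) :
    T y = T.trace 𝕜 E • (𝕜 ∙ v).starProjection y := by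
  rcases eq_or_ne v 0 with rfl | hv0
  · simpa using hv y
  obtain ⟨c, hc⟩ := Submodule.mem_span_singleton.1 (hv v)
  have hvv : ((‖v‖ : 𝕜) ^ 2) ≠ 0 := pow_ne_zero 2 (RCLike.ofReal_ne_zero.2 (norm_ne_zero_iff.2 hv0))
  have hT_rankOne : T = (starRingEnd 𝕜 c / (‖v‖ : 𝕜) ^ 2) • (rankOne 𝕜 v v : E →ₗ[𝕜] E) := by
    ext z
    have hproj := Submodule.starProjection_eq_self_iff.2 (hv z)
    rw [Submodule.starProjection_singleton, ← hT, ← hc, inner_smul_left] at hproj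
    simp [← hproj, smul_smul, div_mul_eq_mul_div]
  have htrace : T.trace 𝕜 E = starRingEnd 𝕜 c := by
    rw [hT_rankOne, map_smul, trace_rankOne, inner_self_eq_norm_sq_to_K, smul_eq_mul,
      div_mul_cancel₀ _ hvv]
  rw [htrace, hT_rankOne, Submodule.starProjection_singleton]
  simp [smul_smul, div_mul_eq_mul_div, mul_div_assoc]

variable {E : Type*} [NormedAddCommGroup E] [InnerProductSpace ℝ E]

section Complete

variable [CompleteSpace E] {u : E → ℝ}

lemma contDiffAt_gradient {n : ℕ∞ω} {x : E} (hu : ContDiffAt ℝ (n + 1) u x) :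
    ContDiffAt ℝ n (∇ u) x :=
  (toDual ℝ E).symm.contDiff.contDiffAt.comp x (hu.fderiv_right le_rfl)

lemma inner_fderiv_gradient (u : E → ℝ) (x y z : E) :
    ⟪fderiv ℝ (∇ u) x y, z⟫ = fderiv ℝ (fderiv ℝ u) x y z := by
  rw [← toDual_comp_gradient, LinearIsometryEquiv.comp_fderiv]
  rfl

lemma isSymmetric_fderiv_gradient {x : E} (hu : ContDiffAt ℝ 2 u x) :
    (fderiv ℝ (∇ u) x : E →ₗ[ℝ] E).IsSymmetric := fun y z => by
  have hsymm : IsSymmSndFDerivAt ℝ u x := hu.isSymmSndFDerivAt (by simp)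
  rw [ContinuousLinearMap.coe_coe, ← real_inner_comm y, inner_fderiv_gradient,
    inner_fderiv_gradient, hsymm.eq]

end Complete

variable [FiniteDimensional ℝ E] {u : E → ℝ}

lemma trace_fderiv_gradient (u : E → ℝ) (x : E) :
    (fderiv ℝ (∇ u) x : E →ₗ[ℝ] E).trace ℝ E = Δ u x := by
  rw [LinearMap.trace_eq_sum_inner _ (stdOrthonormalBasis ℝ E),
    laplacian_eq_iteratedFDeriv_stdOrthonormalBasis]
  refine Finset.sum_congr rfl fun i _ => ?_
  rw [ContinuousLinearMap.coe_coe, real_inner_comm, inner_fderiv_gradient,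
    iteratedFDeriv_two_apply]
  rfl

lemma fderiv_gradient_eq_laplacian_smul {x : E} (hu : ContDiffAt ℝ 2 u x) (hx : ∇ u x ≠ 0)
    (hV : fderiv ℝ (fun y => normalize (∇ u y)) x = 0) (y : E) :
    fderiv ℝ (∇ u) x y = Δ u x • (ℝ ∙ ∇ u x).starProjection y := by
  have hgrad : DifferentiableAt ℝ (∇ u) x :=
    (contDiffAt_gradient (n := 1) hu).differentiableAt one_ne_zero
  rw [← trace_fderiv_gradient]
  exact apply_eq_trace_smul_starProjection (isSymmetric_fderiv_gradient hu)
    (fderiv_mem_span_of_fderiv_normalize_eq_zero hgrad hx hV) y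

lemma isGradientProfile_line {f : ℝ → ℝ} (hu : ContDiff ℝ 2 u)
    (hpde : ∀ x, ∇ u x ≠ 0 → Δ u x + f (u x) = 0)
    (hDV : ∀ x, ∇ u x ≠ 0 → fderiv ℝ (fun y => normalize (∇ u y)) x = 0) (p w : E) :
    IsGradientProfile f w (fun t => u (p + t • w)) (fun t => ∇ u (p + t • w)) := by
  have hgrad : ContDiff ℝ 1 (∇ u) :=
    contDiff_iff_contDiffAt.2 fun x => contDiffAt_gradient hu.contDiffAt
  have hline : ∀ t : ℝ, HasDerivAt (fun t : ℝ => p + t • w) w t := fun t => by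
    simpa only [one_smul, id_eq] using ((hasDerivAt_id t).smul_const w).const_add p
  refine ⟨hgrad.comp (by fun_prop), fun t => ?_, fun t ht => ?_⟩
  · rw [inner_gradient_left]
    exact (hu.differentiable two_ne_zero _).hasFDerivAt.comp_hasDerivAt t (hline t)
  · have hX : HasDerivAt (fun t : ℝ => ∇ u (p + t • w)) (fderiv ℝ (∇ u) (p + t • w) w) t :=
      (hgrad.differentiable one_ne_zero _).hasFDerivAt.comp_hasDerivAt t (hline t)
    rw [hX.deriv, fderiv_gradient_eq_laplacian_smul hu.contDiffAt ht (hDV _ ht),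
      eq_neg_of_add_eq_zero_left (hpde _ ht)]

lemma Lap_eq_laplacian {N : ℕ} {u : EuclideanSpace ℝ (Fin N) → ℝ}
    {x : EuclideanSpace ℝ (Fin N)} (hu : ContDiffAt ℝ 2 u x) : Lap u x = Δ u x := by
  have hd : DifferentiableAt ℝ (fderiv ℝ u) x :=
    (hu.fderiv_right (m := 1) le_rfl).differentiableAt one_ne_zero
  rw [laplacian_eq_iteratedFDeriv_orthonormalBasis u (EuclideanSpace.basisFun (Fin N) ℝ), Lap]
  refine Finset.sum_congr rfl fun i _ => ?_
  rw [Hess, fderiv_clm_apply hd (differentiableAt_const _), iteratedFDeriv_two_apply]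
  simp

end Gradient

section Components

open Set

lemma mem_connectedComponentIn_of_mem_closure {α : Type*} [TopologicalSpace α] {F : Set α}
    {x y : α} (hx : x ∈ F) (hxy : x ∈ closure (connectedComponentIn F y)) :
    x ∈ connectedComponentIn F y := by
  have hne : (connectedComponentIn F y).Nonempty := closure_nonempty_iff.1 ⟨x, hxy⟩
  have hy : y ∈ connectedComponentIn F y :=
    mem_connectedComponentIn (connectedComponentIn_nonempty_iff.1 hne)
  have hinsert : IsPreconnected (insert x (connectedComponentIn F y)) :=
    isPreconnected_connectedComponentIn.subset_closure (subset_insert _ _)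
      (insert_subset hxy subset_closure)
  exact hinsert.subset_connectedComponentIn (mem_insert_of_mem x hy)
    (insert_subset hx (connectedComponentIn_subset F y)) (mem_insert x _)

lemma notMem_of_connectedComponentIn_eq {F : Set ℝ} {t₀ a : ℝ} {b : EReal} (ht₀ : t₀ ∈ F)
    (hcomp : connectedComponentIn F t₀ = {t : ℝ | (a : EReal) < t ∧ (t : EReal) < b}) : a ∉ F := by
  intro ha
  obtain ⟨hat₀, ht₀b⟩ := hcomp ▸ mem_connectedComponentIn ht₀
  have hsub : Ioo a t₀ ⊆ connectedComponentIn F t₀ := hcomp ▸ fun t ht =>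
    ⟨EReal.coe_lt_coe_iff.2 ht.1, (EReal.coe_lt_coe_iff.2 ht.2).trans ht₀b⟩
  have hacl : a ∈ closure (Ioo a t₀) := by
    rw [EReal.coe_lt_coe_iff] at hat₀
    exact closure_Ioo hat₀.ne ▸ left_mem_Icc.2 hat₀.le
  have hmem := mem_connectedComponentIn_of_mem_closure ha (closure_mono hsub hacl)
  exact lt_irrefl _ (hcomp ▸ hmem).1

lemma connectedComponentIn_reflect {F : Set ℝ} {a t₀ : ℝ} (hF : ∀ t, 2 * a - t ∈ F ↔ t ∈ F)
    (ht₀ : t₀ ∈ F) :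
    connectedComponentIn F (2 * a - t₀) = {t | 2 * a - t ∈ connectedComponentIn F t₀} := by
  have himage : ∀ S : Set ℝ, Homeomorph.subLeft (2 * a) '' S = {t | 2 * a - t ∈ S} := fun S => by
    rw [Homeomorph.image_eq_preimage_symm]
    ext t
    simp [neg_add_eq_sub]
  have hF' : {t | 2 * a - t ∈ F} = F := ext hF
  have hreflect := (Homeomorph.subLeft (2 * a)).image_connectedComponentIn ht₀
  rw [himage, himage, hF'] at hreflect
  exact hreflect.symm

lemma coe_sub_sub_lt_coe_iff (a t : ℝ) (b : EReal) :
    (a : EReal) - (b - a) < t ↔ ((2 * a - t : ℝ) : EReal) < b := by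
  induction b using EReal.rec with
  | bot => simp
  | coe b => norm_cast; constructor <;> intro <;> linarith
  | top => simp only [EReal.top_sub_coe, EReal.sub_top, EReal.bot_lt_coe, EReal.coe_lt_top]

lemma coe_lt_coe_iff_lt_reflect (a t : ℝ) :
    (t : EReal) < a ↔ (a : EReal) < ((2 * a - t : ℝ) : EReal) := by
  norm_cast
  constructor <;> intro <;> linarith

end Components

open InnerProductSpace NormedSpace in
open scoped Gradient Laplacian in
theorem statement14_general {E : Type*} [NormedAddCommGroup E] [InnerProductSpace ℝ E]
    [FiniteDimensional ℝ E] {f : ℝ → ℝ} (hf : LocallyLipschitz f) {u : E → ℝ}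
    (hu : ContDiff ℝ 2 u) (hpde : ∀ x, ∇ u x ≠ 0 → Δ u x + f (u x) = 0)
    (hDV : ∀ x, ∇ u x ≠ 0 → fderiv ℝ (fun y => normalize (∇ u y)) x = 0)
    (w p : E) (γ : ℝ → E) (hγ : γ = fun t => p + t • w) {t₀ : ℝ} (ht₀ : ∇ u (γ t₀) ≠ 0)
    {a : ℝ} {b : EReal}
    (hcomp : connectedComponentIn {t | ∇ u (γ t) ≠ 0} t₀ =
      {t : ℝ | (a : EReal) < t ∧ (t : EReal) < b}) :
    (∀ s, u (γ (a + s)) = u (γ (a - s))) ∧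
      ∃ t₁ : ℝ, ((a : EReal) - (b - a) < t₁ ∧ (t₁ : EReal) < a) ∧
        connectedComponentIn {t | ∇ u (γ t) ≠ 0} t₁ =
          {t : ℝ | (a : EReal) - (b - a) < t ∧ (t : EReal) < a} := by
  have hprofile : IsGradientProfile f w (u ∘ γ) (fun t => ∇ u (γ t)) :=
    hγ ▸ isGradientProfile_line hu hpde hDV p w
  have ha : ∇ u (γ a) = 0 := not_not.1 (notMem_of_connectedComponentIn_eq ht₀ hcomp)
  have hreflect := hprofile.reflect_eq hf ht₀ ha
  have hF : ∀ t, 2 * a - t ∈ {t | ∇ u (γ t) ≠ 0} ↔ t ∈ {t | ∇ u (γ t) ≠ 0} := fun t =>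
    not_congr <| (hreflect t).2 ▸ neg_eq_zero
  have hcomp' : connectedComponentIn {t | ∇ u (γ t) ≠ 0} (2 * a - t₀) =
      {t : ℝ | (a : EReal) - (b - a) < t ∧ (t : EReal) < a} := by
    rw [connectedComponentIn_reflect hF ht₀, hcomp]
    ext t
    exact and_comm.trans
      (and_congr (coe_sub_sub_lt_coe_iff a t b).symm (coe_lt_coe_iff_lt_reflect a t).symm)
  refine ⟨fun s => ?_, 2 * a - t₀, ?_, hcomp'⟩
  · rw [show a - s = 2 * a - (a + s) by ring]
    exact ((hreflect (a + s)).1).symm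
  · have hmem := mem_connectedComponentIn ((hF t₀).2 ht₀)
    rwa [hcomp'] at hmem

/-- flat-space instance of Lemma 3.5(c). If a connected component of
`{t | γ(t) ∈ U}` is `(a, b)` with finite left endpoint `a` and `r = b − a ∈ (0, +∞]`,
then the profile `h = u ∘ γ` is symmetric about `a`, and `(a − r, a)` is also a
connected component of `{t | γ(t) ∈ U}`. -/
theorem statement14 {N : ℕ} (hN : 1 ≤ N) (f : ℝ → ℝ) (hf : ContDiff ℝ 1 f)
    (u : EuclideanSpace ℝ (Fin N) → ℝ) (hu : ContDiff ℝ 3 u)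
    (hpde : ∀ x, Lap u x + f (u x) = 0)
    (hDV : ∀ x, gradient u x ≠ 0 → fderiv ℝ (NGrad u) x = 0)
    (w p : EuclideanSpace ℝ (Fin N)) (hw : ‖w‖ = 1)
    (γ : ℝ → EuclideanSpace ℝ (Fin N)) (hγ : γ = fun t => p + t • w)
    (h : ℝ → ℝ) (hh : h = u ∘ γ)
    (hnc : ∃ s t, h s ≠ h t)
    (t₀ : ℝ) (ht₀ : gradient u (γ t₀) ≠ 0)
    (a : ℝ) (b : EReal) (hab : (a : EReal) < b)
    (hcomp : connectedComponentIn {t : ℝ | gradient u (γ t) ≠ 0} t₀ =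
      {t : ℝ | (a : EReal) < (t : EReal) ∧ (t : EReal) < b}) :
    (∀ s : ℝ, h (a + s) = h (a - s)) ∧
      ∃ t₁ : ℝ, ((a : EReal) - (b - (a : EReal)) < (t₁ : EReal) ∧ (t₁ : EReal) < (a : EReal)) ∧
        connectedComponentIn {t : ℝ | gradient u (γ t) ≠ 0} t₁ =
          {t : ℝ | (a : EReal) - (b - (a : EReal)) < (t : EReal) ∧
            (t : EReal) < (a : EReal)} := by
  subst hh
  have hu₂ : ContDiff ℝ 2 u := hu.of_le (by norm_num)
  exact statement14_general hf.locallyLipschitz hu₂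
    (fun x _ => Lap_eq_laplacian hu₂.contDiffAt ▸ hpde x) hDV w p γ hγ ht₀ hcomp
end

section
/- Let f : ℝ → ℝ be continuously differentiable and let u : ℝ^N → ℝ be a nonconstant C³ function with Δu + f(u) = 0 on ℝ^N and DV ≡ 0 on U = {x : ∇u(x) ≠ 0}, where V = ∇u/‖∇u‖. Let U₀ be a connected component of U. Then V is constant on U₀, equal to some unit vector e ∈ ℝ^N, and there exist a < b in ℝ ∪ {−∞, +∞} and a C² function h : (a, b) → ℝ with h' > 0 on (a, b) such that U₀ = {x ∈ ℝ^N : a < ⟨x, e⟩ < b} and u(x) = h(⟨x, e⟩) for all x ∈ U₀. -/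
open RealInnerProductSpace MeasureTheory Filter

/-!
Where `∇u ≠ 0`, `V` is locally constant, so on a component `U₀` it is a constant unit vector `e`
and `du` annihilates `e^⊥`. For `w ⟂ e`, comparing `u` with its translate along `w` inside a small
ball shows that the whole derivative `du` is locally constant along lines of direction `w`. Such a
line therefore cannot leave `U₀`: at a first exit point `du` would, by continuity, still have its
nonzero initial value. Hence `U₀` is invariant under translations by `e^⊥` and is the preimage of
an open interval under `⟪·, e⟫`, and `u` depends on `⟪x, e⟫` only.
-/

section Topology

open Set Topology

theorem inter_closure_connectedComponentIn {X : Type*} [TopologicalSpace X] (U : Set X) (x : X) :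
    U ∩ closure (connectedComponentIn U x) = connectedComponentIn U x := by
  refine Subset.antisymm ?_ (subset_inter (connectedComponentIn_subset U x) subset_closure)
  by_cases hx : x ∈ U
  · have hmem := mem_connectedComponentIn hx
    exact (isPreconnected_connectedComponentIn.subset_closure
      (subset_inter (connectedComponentIn_subset U x) subset_closure)
      inter_subset_right).subset_connectedComponentIn ⟨hx, subset_closure hmem⟩ inter_subset_left
  · simp [connectedComponentIn_eq_empty hx]

theorem eq_Ioo_sInf_sSup_of_isOpen_of_isConnected {α : Type*} [CompleteLinearOrder α]
    [DenselyOrdered α] [TopologicalSpace α] [OrderTopology α] {s : Set α} (hso : IsOpen s)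
    (hsc : IsConnected s) (hbot : ⊥ ∉ s) (htop : ⊤ ∉ s) : s = Ioo (sInf s) (sSup s) := by
  refine Subset.antisymm (fun x hx ↦ ⟨?_, ?_⟩)
    (hsc.Ioo_csInf_csSup_subset (OrderBot.bddBelow s) (OrderTop.bddAbove s))
  · have hx_bot : ⊥ < x := bot_lt_iff_ne_bot.2 (ne_of_mem_of_not_mem hx hbot)
    obtain ⟨l, hlx, hl⟩ := exists_Ioc_subset_of_mem_nhds (hso.mem_nhds hx) ⟨⊥, hx_bot⟩
    obtain ⟨y, hly, hyx⟩ := exists_between hlx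
    exact (sInf_le (hl ⟨hly, hyx.le⟩)).trans_lt hyx
  · have hx_top : x < ⊤ := lt_top_iff_ne_top.2 (ne_of_mem_of_not_mem hx htop)
    obtain ⟨r, hxr, hr⟩ := exists_Ico_subset_of_mem_nhds (hso.mem_nhds hx) ⟨⊤, hx_top⟩
    obtain ⟨y, hxy, hyr⟩ := exists_between hxr
    exact hxy.trans_le (le_sSup (hr ⟨hxy.le, hyr⟩))

theorem exists_ereal_eq_setOf_lt_and_lt {E : Type*} [AddCommGroup E] [Module ℝ E]
    [TopologicalSpace E] [ContinuousAdd E] [ContinuousSMul ℝ E] {ℓ : StrongDual ℝ E} (hℓ : ℓ ≠ 0)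
    {S : Set E} (hSo : IsOpen S) (hSc : IsConnected S)
    (hS : ∀ x ∈ S, ∀ w, ℓ w = 0 → x + w ∈ S) :
    ∃ a b : EReal, a < b ∧ S = {x | a < (ℓ x : EReal) ∧ (ℓ x : EReal) < b} := by
  set J : Set EReal := (fun x ↦ (ℓ x : EReal)) '' S with hJ
  have hJo : IsOpen J :=
    (EReal.isOpenEmbedding_coe.isOpenMap.comp (ℓ.isOpenMap_of_ne_zero hℓ)) S hSo
  have hJc : IsConnected J :=
    hSc.image _ (continuous_coe_real_ereal.comp ℓ.continuous).continuousOn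
  have hJ_Ioo : J = Ioo (sInf J) (sSup J) :=
    eq_Ioo_sInf_sSup_of_isOpen_of_isConnected hJo hJc (by simp [hJ]) (by simp [hJ])
  have hmem (y : E) : y ∈ S ↔ (ℓ y : EReal) ∈ J := by
    refine ⟨mem_image_of_mem _, fun ⟨x, hx, hxy⟩ ↦ ?_⟩
    have hker : ℓ (y - x) = 0 := by rw [map_sub, EReal.coe_injective hxy, sub_self]
    simpa using hS x hx (y - x) hker
  obtain ⟨s, hs⟩ := hJc.nonempty
  rw [hJ_Ioo] at hs
  exact ⟨sInf J, sSup J, hs.1.trans hs.2, Set.ext fun y ↦ (hmem y).trans (Set.ext_iff.1 hJ_Ioo _)⟩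

end Topology

section DirectionalDerivative

open Set Topology

variable {E F : Type*} [NormedAddCommGroup E] [NormedSpace ℝ E] [NormedAddCommGroup F]
  [NormedSpace ℝ F]

theorem eq_of_mem_connectedComponentIn_of_hasFDerivAt_zero {V : E → F} {U : Set E}
    (hU : IsOpen U) (hV : ∀ x ∈ U, HasFDerivAt V (0 : E →L[ℝ] F) x) {x y : E}
    (hy : y ∈ connectedComponentIn U x) : V y = V x := by
  have hsub := connectedComponentIn_subset U x
  have hx : x ∈ U := connectedComponentIn_nonempty_iff.1 ⟨y, hy⟩
  exact hU.connectedComponentIn.is_const_of_fderiv_eq_zero (𝕜 := ℝ)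
    isPreconnected_connectedComponentIn
    (fun z hz ↦ (hV z (hsub hz)).differentiableAt.differentiableWithinAt)
    (fun z hz ↦ (hV z (hsub hz)).fderiv) hy (mem_connectedComponentIn hx)

variable {u : E → F}

theorem hasDerivAt_comp_smul_const {e : E} {s : ℝ} (hu : DifferentiableAt ℝ u (s • e)) :
    HasDerivAt (fun s : ℝ ↦ u (s • e)) (fderiv ℝ u (s • e) e) s :=
  hu.hasFDerivAt.comp_hasDerivAt s (by simpa using (hasDerivAt_id s).smul_const e)

theorem eq_of_fderiv_sub_eq_zero_on_segment {x y : E}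
    (hd : ∀ z ∈ segment ℝ x y, DifferentiableAt ℝ u z)
    (h : ∀ z ∈ segment ℝ x y, fderiv ℝ u z (y - x) = 0) : u y = u x := by
  have hderiv : ∀ t ∈ Icc (0 : ℝ) 1,
      HasDerivAt (fun t ↦ u (AffineMap.lineMap x y t)) 0 t := fun t ht ↦ by
    have hmem : AffineMap.lineMap x y t ∈ segment ℝ x y :=
      segment_eq_image_lineMap ℝ x y ▸ mem_image_of_mem _ ht
    rw [← h _ hmem]
    exact (hd _ hmem).hasFDerivAt.comp_hasDerivAt t AffineMap.hasDerivAt_lineMap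
  simpa using constant_of_has_deriv_right_zero
    (fun t ht ↦ (hderiv t ht).continuousAt.continuousWithinAt)
    (fun t ht ↦ (hderiv t (Ico_subset_Icc_self ht)).hasDerivWithinAt) 1
    (right_mem_Icc.2 zero_le_one)

theorem fderiv_eq_of_fderiv_sub_eq_zero {B : Set E} (hBo : IsOpen B) (hB : Convex ℝ B)
    (hd : DifferentiableOn ℝ u B) {x y : E} (hx : x ∈ B) (hy : y ∈ B)
    (h : ∀ z ∈ B, fderiv ℝ u z (y - x) = 0) : fderiv ℝ u y = fderiv ℝ u x := by
  have htranslate : (fun z ↦ u (z + (y - x))) =ᶠ[𝓝 x] u := by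
    have hadd : ∀ᶠ z in 𝓝 x, z + (y - x) ∈ B :=
      (continuous_add_const (y - x)).continuousAt.eventually_mem
        (hBo.mem_nhds (by simpa using hy))
    filter_upwards [hBo.mem_nhds hx, hadd] with z hz hz'
    have hseg := hB.segment_subset hz hz'
    refine eq_of_fderiv_sub_eq_zero_on_segment
      (fun p hp ↦ hd.differentiableAt (hBo.mem_nhds (hseg hp))) fun p hp ↦ ?_
    simpa using h p (hseg hp)
  simpa [fderiv_comp_add_right] using htranslate.fderiv_eq (𝕜 := ℝ)

theorem add_smul_mem_of_fderiv_apply_eq_zero (hu : ContDiff ℝ 1 u) {S : Set E} (hSo : IsOpen S)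
    (hS : {x | fderiv ℝ u x ≠ 0} ∩ closure S = S) {w : E} (hw : ∀ x ∈ S, fderiv ℝ u x w = 0)
    {x : E} (hx : x ∈ S) (t : ℝ) : x + t • w ∈ S := by
  let A : Set ℝ := {t | x + t • w ∈ S ∧ fderiv ℝ u (x + t • w) = fderiv ℝ u x}
  have hline : Continuous fun t : ℝ ↦ x + t • w := by fun_prop
  have hA_closed : IsClosed A := by
    refine isClosed_of_closure_subset fun t ht ↦ ?_
    have hderiv : fderiv ℝ u (x + t • w) = fderiv ℝ u x :=
      closure_minimal (fun s hs ↦ hs.2)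
        (isClosed_eq ((hu.continuous_fderiv one_ne_zero).comp hline) continuous_const) ht
    have hcl : x + t • w ∈ closure S :=
      map_mem_closure (f := fun t ↦ x + t • w) hline ht fun s hs ↦ hs.1
    have hne : fderiv ℝ u x ≠ 0 := (hS.ge hx).1
    exact ⟨hS.le ⟨hderiv.trans_ne hne, hcl⟩, hderiv⟩
  have hA_open : IsOpen A := by
    refine isOpen_iff_mem_nhds.2 fun t ht ↦ ?_
    obtain ⟨r, hr, hball⟩ := Metric.isOpen_iff.1 hSo _ ht.1
    filter_upwards [hline.continuousAt.preimage_mem_nhds (Metric.ball_mem_nhds _ hr)] with s hs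
    refine ⟨hball hs, Eq.trans ?_ ht.2⟩
    refine fderiv_eq_of_fderiv_sub_eq_zero Metric.isOpen_ball (convex_ball _ r)
      (hu.differentiable one_ne_zero).differentiableOn (Metric.mem_ball_self hr) hs fun z hz ↦ ?_
    rw [add_sub_add_left_eq_sub, ← sub_smul, map_smul, hw z (hball hz), smul_zero]
  have hA : A = univ := IsClopen.eq_univ ⟨hA_closed, hA_open⟩ ⟨0, by simpa [A] using hx⟩
  exact (hA.ge (mem_univ t)).1

theorem add_mem_and_eq_of_fderiv_apply_eq_zero (hu : ContDiff ℝ 1 u) {S : Set E} (hSo : IsOpen S)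
    (hS : {x | fderiv ℝ u x ≠ 0} ∩ closure S = S) {w : E} (hw : ∀ x ∈ S, fderiv ℝ u x w = 0)
    {x : E} (hx : x ∈ S) : x + w ∈ S ∧ u (x + w) = u x := by
  have hline := add_smul_mem_of_fderiv_apply_eq_zero hu hSo hS hw hx
  refine ⟨by simpa using hline 1, eq_of_fderiv_sub_eq_zero_on_segment
    (fun z _ ↦ hu.differentiable one_ne_zero z) ?_⟩
  rw [segment_eq_image']
  rintro _ ⟨t, -, rfl⟩
  simpa using hw _ (by simpa using hline t)

end DirectionalDerivative

section Gradient

variable {E : Type*} [NormedAddCommGroup E] [InnerProductSpace ℝ E] [CompleteSpace E] {u : E → ℝ}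

theorem gradient_ne_zero_iff {x : E} : gradient u x ≠ 0 ↔ fderiv ℝ u x ≠ 0 := by
  simp [gradient]

theorem fderiv_apply_eq_norm_gradient_mul_inner_normalize (x w : E) :
    fderiv ℝ u x w = ‖gradient u x‖ * ⟪NormedSpace.normalize (gradient u x), w⟫ := by
  rw [← real_inner_smul_left, NormedSpace.norm_smul_normalize, inner_gradient_left]

theorem differentiableAt_normalize_gradient {x : E} (hu : ContDiffAt ℝ 2 u x)
    (hx : gradient u x ≠ 0) :
    DifferentiableAt ℝ (fun y ↦ NormedSpace.normalize (gradient u y)) x := by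
  have hfderiv : DifferentiableAt ℝ (fderiv ℝ u) x :=
    (hu.fderiv_right (m := 1) (by norm_num)).differentiableAt one_ne_zero
  have hgrad : DifferentiableAt ℝ (gradient u) x :=
    (InnerProductSpace.toDual ℝ E).symm.differentiable.differentiableAt.comp x hfderiv
  exact ((hgrad.norm ℝ hx).inv (norm_ne_zero_iff.2 hx)).smul hgrad

theorem isOpen_setOf_gradient_ne_zero (hu : ContDiff ℝ 1 u) : IsOpen {x | gradient u x ≠ 0} := by
  simpa only [gradient_ne_zero_iff] using
    isOpen_ne_fun (hu.continuous_fderiv one_ne_zero) continuous_const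

theorem add_mem_connectedComponentIn_and_eq_of_inner_eq_zero (hu : ContDiff ℝ 1 u) {x₀ e : E}
    (he : ∀ x ∈ connectedComponentIn {x | gradient u x ≠ 0} x₀,
      NormedSpace.normalize (gradient u x) = e)
    {w : E} (hw : ⟪e, w⟫ = 0) {x : E} (hx : x ∈ connectedComponentIn {x | gradient u x ≠ 0} x₀) :
    x + w ∈ connectedComponentIn {x | gradient u x ≠ 0} x₀ ∧ u (x + w) = u x := by
  refine add_mem_and_eq_of_fderiv_apply_eq_zero hu
    (isOpen_setOf_gradient_ne_zero hu).connectedComponentIn ?_ (fun z hz ↦ ?_) hx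
  · simpa only [gradient_ne_zero_iff] using
      inter_closure_connectedComponentIn {x | gradient u x ≠ 0} x₀
  · rw [fderiv_apply_eq_norm_gradient_mul_inner_normalize, he z hz, hw, mul_zero]

theorem statement15_general {n : WithTop ℕ∞} (hn : n ≠ 0) (hu : ContDiff ℝ n u)
    (hV : ∀ x, gradient u x ≠ 0 →
      HasFDerivAt (fun y ↦ NormedSpace.normalize (gradient u y)) (0 : E →L[ℝ] E) x)
    {x₀ : E} (hx₀ : gradient u x₀ ≠ 0) :
    ∃ e : E, ‖e‖ = 1 ∧ (∀ x ∈ connectedComponentIn {x | gradient u x ≠ 0} x₀,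
        NormedSpace.normalize (gradient u x) = e) ∧
      ∃ a b : EReal, a < b ∧
        connectedComponentIn {x | gradient u x ≠ 0} x₀ =
          {x | a < (⟪x, e⟫ : EReal) ∧ (⟪x, e⟫ : EReal) < b} ∧
        ∃ h : ℝ → ℝ,
          ContDiffOn ℝ n h {s : ℝ | a < (s : EReal) ∧ (s : EReal) < b} ∧
          (∀ s : ℝ, a < (s : EReal) → (s : EReal) < b → 0 < deriv h s) ∧
          ∀ x ∈ connectedComponentIn {x | gradient u x ≠ 0} x₀, u x = h ⟪x, e⟫ := by
  set U := {x | gradient u x ≠ 0}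
  set e := NormedSpace.normalize (gradient u x₀)
  have hu1 : ContDiff ℝ 1 u := hu.of_le (ENat.one_le_iff_ne_zero_withTop.2 hn)
  have hUo : IsOpen U := isOpen_setOf_gradient_ne_zero hu1
  have he : ‖e‖ = 1 := NormedSpace.norm_normalize hx₀
  have hee : ⟪e, e⟫ = 1 := inner_self_eq_one_of_norm_eq_one he
  have hVe : ∀ x ∈ connectedComponentIn U x₀, NormedSpace.normalize (gradient u x) = e :=
    fun x hx ↦ eq_of_mem_connectedComponentIn_of_hasFDerivAt_zero hUo hV hx
  obtain ⟨a, b, hab, hslab⟩ := exists_ereal_eq_setOf_lt_and_lt (ℓ := innerSL ℝ e)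
    (norm_ne_zero_iff.1 (by simp [he])) hUo.connectedComponentIn
    (isConnected_connectedComponentIn_iff.2 hx₀)
    (fun x hx w hw ↦ (add_mem_connectedComponentIn_and_eq_of_inner_eq_zero hu1 hVe hw hx).1)
  simp only [innerSL_apply_apply, real_inner_comm _ e] at hslab
  refine ⟨e, he, hVe, a, b, hab, hslab, fun s ↦ u (s • e), ?_, fun s has hsb ↦ ?_, fun x hx ↦ ?_⟩
  · exact (hu.comp (contDiff_id.smul contDiff_const)).contDiffOn
  · have hs : s • e ∈ connectedComponentIn U x₀ :=
      hslab.ge (by simpa [real_inner_smul_left, he] using And.intro has hsb)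
    rw [(hasDerivAt_comp_smul_const (hu.differentiable hn _)).deriv,
      fderiv_apply_eq_norm_gradient_mul_inner_normalize, hVe _ hs, hee, mul_one]
    exact norm_pos_iff.2 (connectedComponentIn_subset U x₀ hs)
  · have hperp : ⟪e, ⟪x, e⟫ • e - x⟫ = 0 := by
      rw [inner_sub_right, real_inner_smul_right, hee, mul_one, real_inner_comm, sub_self]
    have hproj := (add_mem_connectedComponentIn_and_eq_of_inner_eq_zero hu1 hVe hperp hx).2
    simpa using hproj.symm

end Gradient

/-- flat-space instance of Lemma 3.7. If `u` is a nonconstant `C³`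
solution of `Δu + f(u) = 0` with `DV ≡ 0` on `U = {∇u ≠ 0}`, then on any connected
component `U₀` of `U` the normalized gradient `V` is a constant unit vector `e`, `U₀` is
the open slab `{a < ⟨x, e⟩ < b}` for some `a < b` in `ℝ ∪ {±∞}`, and `u(x) = h(⟨x, e⟩)`
on `U₀` for a `C²` profile `h` with `h' > 0`. -/
theorem statement15 {N : ℕ} (hN : 1 ≤ N) (f : ℝ → ℝ) (hf : ContDiff ℝ 1 f)
    (u : EuclideanSpace ℝ (Fin N) → ℝ) (hu : ContDiff ℝ 3 u)
    (hnc : ∃ x y, u x ≠ u y)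
    (hpde : ∀ x, Lap u x + f (u x) = 0)
    (hDV : ∀ x, gradient u x ≠ 0 → fderiv ℝ (NGrad u) x = 0)
    (x₀ : EuclideanSpace ℝ (Fin N)) (hx₀ : gradient u x₀ ≠ 0)
    (U₀ : Set (EuclideanSpace ℝ (Fin N)))
    (hU₀ : U₀ = connectedComponentIn {x | gradient u x ≠ 0} x₀) :
    ∃ e : EuclideanSpace ℝ (Fin N), ‖e‖ = 1 ∧ (∀ x ∈ U₀, NGrad u x = e) ∧
      ∃ a b : EReal, a < b ∧
        U₀ = {x : EuclideanSpace ℝ (Fin N) |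
          a < ((⟪x, e⟫ : ℝ) : EReal) ∧ ((⟪x, e⟫ : ℝ) : EReal) < b} ∧
        ∃ h : ℝ → ℝ,
          ContDiffOn ℝ 2 h {s : ℝ | a < (s : EReal) ∧ (s : EReal) < b} ∧
          (∀ s : ℝ, a < (s : EReal) → (s : EReal) < b → 0 < deriv h s) ∧
          ∀ x ∈ U₀, u x = h ⟪x, e⟫ := by
  subst hU₀
  exact statement15_general two_ne_zero (hu.of_le (by norm_num))
    (fun x hx ↦ hDV x hx ▸
      (differentiableAt_normalize_gradient (hu.contDiffAt.of_le (by norm_num)) hx).hasFDerivAt) hx₀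
end
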